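/- Let (X_i, Y_i), i ≥ 1, be an i.i.d. sequence with X_i ∈ ℝ^p and Y_i ∈ ℝ, and let Ψ : ℝ → ℝ^H be measurable. Define K = (X − E[X])(Ψ(Y) − E[Ψ(Y)])ᵀ, C = E[K], Ĉ = (1/n)Σ_i K̂_i with K̂_i = (X_i − X̄)(Ψ_i − Ψ̄)ᵀ (X̄, Ψ̄ the sample means, Ψ_i = Ψ(Y_i)), and the weighted-bootstrap terms K*_i = w_i (K̂_i − (1/n)Σ_j K̂_j), where (w_i) is an i.i.d. sequence of real random variables with mean 0 and variance 1, independent of the data. Let V = Var(vec(K)) and V* = (1/n) Σ_i vec(K*_i − K̄*) vec(K*_i − K̄*)ᵀ with K̄* = (1/n)Σ_i K*_i. If E[‖X‖²] < ∞, E[‖Ψ(Y)‖²] < ∞ and E[‖K‖_F⁴] < ∞, then almost surely the conditional law of n^{1/2} K̄* given the data converges weakly to the asymptotic law of n^{1/2}(Ĉ − C) (which is N(0, V)), and V* → V in probability conditionally almost surely. -/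

import Mathlib

open MeasureTheory ProbabilityTheory Filter Matrix Polynomial Topology
open scoped Kronecker

noncomputable section

/-- Convergence in distribution (weak convergence of the laws) of a sequence of random
elements `X n` towards the limit law `L`. -/
def TendstoInDistribution {Ω E : Type*} [MeasurableSpace Ω] [MeasurableSpace E] [TopologicalSpace E]
    (μ : Measure Ω) (X : ℕ → Ω → E) (L : Measure E) : Prop :=
  ∀ f : BoundedContinuousFunction E ℝ,
    Tendsto (fun n => ∫ ω, f (X n ω) ∂μ) atTop (𝓝 (∫ x, f x ∂L))

/-- Convergence in probability of `X n` towards the constant `c`. -/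
def TendstoInProbability {Ω E : Type*} [MeasurableSpace Ω] [PseudoMetricSpace E]
    (μ : Measure Ω) (X : ℕ → Ω → E) (c : E) : Prop :=
  ∀ ε : ℝ, 0 < ε → Tendsto (fun n => μ {ω | ε ≤ dist (X n ω) c}) atTop (𝓝 0)

/-- The law of a vector of i.i.d. standard Gaussian random variables. -/
def stdGaussianPi (ι : Type*) [Fintype ι] : Measure (ι → ℝ) :=
  Measure.pi fun _ => gaussianReal 0 1

/-- Positive semidefinite square root (junk value `0` if the matrix is not psd). -/
def matSqrt {ι : Type*} [Fintype ι] [DecidableEq ι] (Γ : Matrix ι ι ℝ) : Matrix ι ι ℝ :=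
  by classical exact if h : Γ.PosSemidef then
      (h.1.eigenvectorUnitary : Matrix ι ι ℝ) * diagonal (Real.sqrt ∘ h.1.eigenvalues) *
        (star h.1.eigenvectorUnitary : Matrix ι ι ℝ)
    else 0

/-- The centered Gaussian distribution `N(0, Γ)` on `ι → ℝ`. -/
def gaussianPi {ι : Type*} [Fintype ι] [DecidableEq ι] (Γ : Matrix ι ι ℝ) :
    Measure (ι → ℝ) :=
  (stdGaussianPi ι).map (fun z => matSqrt Γ *ᵥ z)

/-- The chi-squared distribution with `k` degrees of freedom: the law of the squared
Euclidean norm of a standard Gaussian vector of `ℝ^k`. -/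
def chiSquared (k : ℕ) : Measure ℝ :=
  (stdGaussianPi (Fin k)).map (fun z => ∑ i, z i ^ 2)

/-- `vec` operator stacking the columns of a `p × H` matrix. -/
def vecM {p H : ℕ} (M : Matrix (Fin p) (Fin H) ℝ) : Fin H × Fin p → ℝ :=
  fun x => M x.2 x.1

/-- The `(1-α)`-quantile of the law of the real random variable `T` under `ν`:
`inf {x | F(x) ≥ 1 - α}`. -/
def lawQuantile {Ω' : Type*} [MeasurableSpace Ω'] (ν : Measure Ω') (T : Ω' → ℝ) (α : ℝ) : ℝ :=
  sInf {x : ℝ | 1 - α ≤ (ν {ω' | T ω' ≤ x}).toReal}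

/-- A point `θ` is `ℳ`-nonsingular if `θ ∈ ℳ` and, near `θ`, the set `ℳ` is the zero set of a
continuously differentiable function `g` with values in some `ℝ^q` whose Jacobian at `θ` has
full rank `q`. -/
def MNonsingular {p : ℕ} (M : Set (Fin p → ℝ)) (θ : Fin p → ℝ) : Prop :=
  θ ∈ M ∧ ∃ (q : ℕ) (V : Set (Fin p → ℝ)) (g : (Fin p → ℝ) → Fin q → ℝ),
    IsOpen V ∧ θ ∈ V ∧ ContDiffOn ℝ 1 g V ∧
    (LinearMap.toMatrix' ((fderiv ℝ g θ) : (Fin p → ℝ) →ₗ[ℝ] (Fin q → ℝ))).rank = q ∧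
    M ∩ V = {x | g x = 0} ∩ V

/-- Moore–Penrose pseudo-inverse relation for real square matrices. -/
def IsMoorePenroseInv {ι : Type*} [Fintype ι] (A X : Matrix ι ι ℝ) : Prop :=
  A * X * A = A ∧ X * A * X = X ∧ (A * X)ᵀ = A * X ∧ (X * A)ᵀ = X * A


lemma aux_prod_sub (s : Finset ℕ) (a b : ℕ → ℂ) (ha : ∀ j, ‖a j‖ ≤ 1) (hb : ∀ j, ‖b j‖ ≤ 1) :
    ‖∏ j ∈ s, a j - ∏ j ∈ s, b j‖ ≤ ∑ j ∈ s, ‖a j - b j‖ := by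
  classical
  induction s using Finset.induction with
  | empty => simp
  | insert i s hi ih =>
    rw [Finset.prod_insert hi, Finset.prod_insert hi, Finset.sum_insert hi]
    have h1 : a i * ∏ j ∈ s, a j - b i * ∏ j ∈ s, b j
        = (a i - b i) * ∏ j ∈ s, a j + b i * (∏ j ∈ s, a j - ∏ j ∈ s, b j) := by ring
    have h2 : ‖∏ j ∈ s, a j‖ ≤ 1 := by
      rw [norm_prod]
      exact Finset.prod_le_one (fun _ _ => norm_nonneg _) (fun j _ => ha j)
    rw [h1]
    refine (norm_add_le _ _).trans ?_
    rw [norm_mul, norm_mul]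
    have h3 := mul_le_mul_of_nonneg_left h2 (norm_nonneg (a i - b i))
    have h4 := mul_le_mul_of_nonneg_right (hb i) (norm_nonneg (∏ j ∈ s, a j - ∏ j ∈ s, b j))
    linarith

/-- product convergence for arrays -/
lemma aux_array_prod (ψ χ : ℝ → ℂ) (hψ : ∀ s, ‖ψ s‖ ≤ 1) (hχ : ∀ s, ‖χ s‖ ≤ 1)
    (g : ℝ → ℝ) (hg : ∀ s, 0 ≤ g s)
    (ho : (fun s => ψ s - χ s) =o[𝓝 0] g) (c : ℕ → ℕ → ℝ)
    (hmax : ∀ ε > 0, ∀ᶠ n in atTop, ∀ j < n, |c n j| ≤ ε)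
    (B : ℝ) (hB : ∀ᶠ n in atTop, ∑ j ∈ Finset.range n, g (c n j) ≤ B) :
    Tendsto (fun n => ∏ j ∈ Finset.range n, ψ (c n j) - ∏ j ∈ Finset.range n, χ (c n j))
      atTop (𝓝 0) := by
  rw [Metric.tendsto_atTop']
  suffices H : ∀ ε > 0, ∀ᶠ n in atTop, ‖∏ j ∈ Finset.range n, ψ (c n j) -
      ∏ j ∈ Finset.range n, χ (c n j)‖ < ε by
    intro ε hε
    obtain ⟨N, hN⟩ := eventually_atTop.1 (H ε hε)
    exact ⟨N, fun n hn => by simpa using hN n hn.le⟩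
  intro ε hε
  have hδ : 0 < ε / (2 * (|B| + 1)) := by positivity
  have h1 := ho.def hδ
  obtain ⟨η, hη, h1⟩ := Metric.eventually_nhds_iff.1 h1
  filter_upwards [hmax (η / 2) (by positivity), hB] with n hn hBn
  refine (aux_prod_sub _ _ _ (fun j => hψ _) (fun j => hχ _)).trans_lt ?_
  calc ∑ j ∈ Finset.range n, ‖ψ (c n j) - χ (c n j)‖
      ≤ ∑ j ∈ Finset.range n, ε / (2 * (|B| + 1)) * g (c n j) := by
        refine Finset.sum_le_sum fun j hj => ?_
        have := @h1 (c n j) (by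
          have := hn j (Finset.mem_range.1 hj)
          simp only [dist_zero_right, Real.norm_eq_abs]; linarith)
        simpa [abs_of_nonneg (hg _)] using this
    _ = ε / (2 * (|B| + 1)) * ∑ j ∈ Finset.range n, g (c n j) := by rw [Finset.mul_sum]
    _ ≤ ε / (2 * (|B| + 1)) * |B| := by
        gcongr
        exact hBn.trans (le_abs_self B)
    _ < ε := by
        rw [div_mul_eq_mul_div, div_lt_iff₀ (by positivity)]
        nlinarith [abs_nonneg B]

lemma aux_taylor {Ω : Type*} [MeasurableSpace Ω] (μ : Measure Ω) [IsProbabilityMeasure μ]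
    (W : Ω → ℝ) (hW : Measurable W) (h2 : Integrable (fun ω => (W ω) ^ 2) μ)
    (h0 : ∫ ω, W ω ∂μ = 0) (σ : ℝ) (hσ : ∫ ω, (W ω) ^ 2 ∂μ = σ) :
    (fun t : ℝ ↦ charFun (μ.map W) t - (1 - σ * t ^ 2 / 2)) =o[𝓝 0] fun t : ℝ ↦ t ^ 2 := by
  have : IsProbabilityMeasure (μ.map W) := Measure.isProbabilityMeasure_map hW.aemeasurable
  have hm : MemLp id 2 (μ.map W) := by
    refine (memLp_two_iff_integrable_sq (by fun_prop)).2 ?_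
    rw [integrable_map_measure (by fun_prop) (by fun_prop)]
    exact h2
  have hT := fun t => taylorWithinEval_charFun_two_zero (P := μ) hW.aemeasurable hm t
  have e : ∀ t : ℝ, (1 - σ * t ^ 2 / 2 : ℂ) =
     taylorWithinEval (charFun (μ.map W)) 2 Set.univ 0 t := by
    intro t
    rw [hT, h0]
    simp only [Pi.pow_apply, hσ]
    simp
  simp_rw [e]
  have := taylor_isLittleO_univ (x₀ := (0:ℝ)) (n := 2) (contDiff_charFun (μ := μ.map W) hm)
  simpa using this

lemma aux_taylor_one {Ω : Type*} [MeasurableSpace Ω] (μ : Measure Ω) [IsProbabilityMeasure μ]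
    (W : Ω → ℝ) (hW : Measurable W) (h2 : Integrable W μ)
    (h0 : ∫ ω, W ω ∂μ = 0) :
    (fun t : ℝ ↦ charFun (μ.map W) t - 1) =o[𝓝 0] fun t : ℝ ↦ t := by
  have : IsProbabilityMeasure (μ.map W) := Measure.isProbabilityMeasure_map hW.aemeasurable
  have hm : MemLp id 1 (μ.map W) := by
    refine memLp_one_iff_integrable.2 ?_
    rw [integrable_map_measure (by fun_prop) (by fun_prop)]
    exact h2
  have e : ∀ t : ℝ, (1 : ℂ) =
     taylorWithinEval (charFun (μ.map W)) 1 Set.univ 0 t := by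
    intro t
    rw [taylorWithinEval_charFun_zero (by simpa using hm)]
    rw [Finset.sum_range_succ, Finset.sum_range_one]
    simp only [pow_one, pow_zero]
    rw [integral_map (f := fun x : ℝ => x) (by fun_prop) (by fun_prop), h0]
    simp
  have := taylor_isLittleO_univ (x₀ := (0:ℝ)) (n := 1)
    (contDiff_charFun (μ := μ.map W) (by simpa using hm))
  simp_rw [← e] at this
  simpa using this

lemma aux_exp_taylor (σ : ℝ) :
    (fun t : ℝ ↦ Complex.exp (-(σ * t ^ 2 / 2 : ℝ)) - (1 - σ * t ^ 2 / 2)) =o[𝓝 0]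
      fun t : ℝ ↦ t ^ 2 := by
  have h := (hasDerivAt_iff_isLittleO_nhds_zero.1 (Complex.hasDerivAt_exp 0))
  have hk : Tendsto (fun t : ℝ => ((-(σ * t ^ 2 / 2 : ℝ) : ℝ) : ℂ)) (𝓝 0) (𝓝 0) := by
    have : Continuous (fun t : ℝ => ((-(σ * t ^ 2 / 2 : ℝ) : ℝ) : ℂ)) := by fun_prop
    simpa using this.tendsto 0
  have h2 := h.comp_tendsto hk
  refine Asymptotics.IsLittleO.trans_isBigO (g := fun t : ℝ => ((-(σ * t ^ 2 / 2 : ℝ) : ℝ) : ℂ)) ?_ ?_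
  · refine h2.congr_left fun t => ?_
    simp [Function.comp]
    ring
  · refine Asymptotics.IsBigO.of_bound (|σ|) (Eventually.of_forall fun t => ?_)
    rw [Complex.norm_real]
    simp only [norm_neg, Real.norm_eq_abs, norm_pow, sq_abs, abs_mul, abs_div, abs_pow]
    have := mul_nonneg (abs_nonneg σ) (sq_nonneg t)
    norm_num
    linarith

lemma aux_charFun_sum {Ω : Type*} [MeasurableSpace Ω] (μ : Measure Ω) [IsProbabilityMeasure μ]
    (W : ℕ → Ω → ℝ) (hW : ∀ i, Measurable (W i)) (hind : iIndepFun W μ)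
    (hid : ∀ i, IdentDistrib (W i) (W 0) μ μ) (c : ℕ → ℝ) (n : ℕ) (t : ℝ) :
    charFun (μ.map (fun ω => ∑ j ∈ Finset.range n, c j * W j ω)) t =
      ∏ j ∈ Finset.range n, charFun (μ.map (W 0)) (c j * t) := by
  have h := iIndepFun.charFun_map_fun_finsetSum_eq_prod (P := μ) (s := Finset.range n)
    (X := fun j ω => c j * W j ω) (fun i _ => ((hW i).const_mul _).aemeasurable)
    (((hind.comp (fun j x => c j * x) (fun j => measurable_const_mul _))).restrict _)
  rw [h, Finset.prod_apply]
  refine Finset.prod_congr rfl fun j _ => ?_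
  rw [charFun_map_mul_comp (hW j).aemeasurable, (hid j).map_eq]

lemma aux_weighted_clt {Ω : Type*} [MeasurableSpace Ω] (μ : Measure Ω) [IsProbabilityMeasure μ]
    (W : ℕ → Ω → ℝ) (hW : ∀ i, Measurable (W i)) (hind : iIndepFun W μ)
    (hid : ∀ i, IdentDistrib (W i) (W 0) μ μ)
    (h2 : Integrable (fun ω => (W 0 ω) ^ 2) μ)
    (h0 : ∫ ω, W 0 ω ∂μ = 0) (σ : ℝ) (hσ : ∫ ω, (W 0 ω) ^ 2 ∂μ = σ)
    (c : ℕ → ℕ → ℝ) (hmax : ∀ ε > 0, ∀ᶠ n in atTop, ∀ j < n, |c n j| ≤ ε)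
    (τ : ℝ) (hτ : Tendsto (fun n => ∑ j ∈ Finset.range n, c n j ^ 2) atTop (𝓝 τ)) :
    Tendsto (fun n => ∫ ω, Complex.exp ((∑ j ∈ Finset.range n, c n j * W j ω : ℝ) * Complex.I) ∂μ)
      atTop (𝓝 (Complex.exp (-(σ * τ / 2 : ℝ)))) := by
  have : IsProbabilityMeasure (μ.map (W 0)) := Measure.isProbabilityMeasure_map (hW 0).aemeasurable
  have hσ0 : 0 ≤ σ := by rw [← hσ]; positivity
  have e : ∀ n, ∫ ω, Complex.exp ((∑ j ∈ Finset.range n, c n j * W j ω : ℝ) * Complex.I) ∂μ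
      = ∏ j ∈ Finset.range n, charFun (μ.map (W 0)) (c n j) := by
    intro n
    have := aux_charFun_sum μ W hW hind hid (c n) n 1
    simp only [mul_one] at this
    rw [← this, charFun_apply_real, integral_map]
    · simp
    · exact (Finset.measurable_fun_sum _ fun j _ => (hW j).const_mul _).aemeasurable
    · fun_prop
  simp_rw [e]
  have h1 := aux_array_prod (charFun (μ.map (W 0))) (fun t => Complex.exp (-(σ * t ^ 2 / 2 : ℝ)))
    (fun s => norm_charFun_le_one s) (fun s => by
      rw [← Complex.ofReal_neg, Complex.norm_exp_ofReal]
      apply Real.exp_le_one_iff.2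
      have := mul_nonneg hσ0 (sq_nonneg s)
      linarith) (fun t => t ^ 2) (fun s => sq_nonneg s)
    (by
      have := (aux_taylor μ (W 0) (hW 0) h2 h0 σ hσ).sub (aux_exp_taylor σ)
      simpa using this) c hmax (τ + 1) (by
      filter_upwards [hτ.eventually (gt_mem_nhds (lt_add_one τ))] with n hn using hn.le)
  have h3 : Tendsto (fun n => ∏ j ∈ Finset.range n,
      Complex.exp (-(σ * (c n j) ^ 2 / 2 : ℝ))) atTop (𝓝 (Complex.exp (-(σ * τ / 2 : ℝ)))) := by
    have : ∀ n, ∏ j ∈ Finset.range n, Complex.exp (-(σ * (c n j) ^ 2 / 2 : ℝ)) =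
        Complex.exp (-(σ * (∑ j ∈ Finset.range n, c n j ^ 2) / 2 : ℝ)) := by
      intro n
      rw [← Complex.exp_sum]
      congr 1
      push_cast
      rw [Finset.sum_neg_distrib, Finset.mul_sum, Finset.sum_div]
    simp_rw [this]
    have hc : Continuous (fun x : ℝ => Complex.exp (-(σ * x / 2 : ℝ))) := by fun_prop
    exact (hc.tendsto τ).comp hτ
  simpa using h1.add h3

lemma aux_weighted_wlln {Ω : Type*} [MeasurableSpace Ω] (μ : Measure Ω) [IsProbabilityMeasure μ]
    (W : ℕ → Ω → ℝ) (hW : ∀ i, Measurable (W i)) (hind : iIndepFun W μ)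
    (hid : ∀ i, IdentDistrib (W i) (W 0) μ μ)
    (h2 : Integrable (W 0) μ) (h0 : ∫ ω, W 0 ω ∂μ = 0)
    (c : ℕ → ℕ → ℝ) (hmax : ∀ ε > 0, ∀ᶠ n in atTop, ∀ j < n, |c n j| ≤ ε)
    (B : ℝ) (hB : ∀ᶠ n in atTop, ∑ j ∈ Finset.range n, |c n j| ≤ B) (ε : ℝ) (hε : 0 < ε) :
    Tendsto (fun n => μ {ω | ε ≤ |∑ j ∈ Finset.range n, c n j * W j ω|}) atTop (𝓝 0) := by
  have : IsProbabilityMeasure (μ.map (W 0)) := Measure.isProbabilityMeasure_map (hW 0).aemeasurable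
  have hmS : ∀ n, Measurable (fun ω => ∑ j ∈ Finset.range n, c n j * W j ω) := fun n =>
    Finset.measurable_fun_sum _ fun j _ => (hW j).const_mul _
  let P : ℕ → ProbabilityMeasure ℝ := fun n =>
    ⟨μ.map (fun ω => ∑ j ∈ Finset.range n, c n j * W j ω),
      Measure.isProbabilityMeasure_map (hmS n).aemeasurable⟩
  let P0 : ProbabilityMeasure ℝ := ⟨Measure.dirac 0, inferInstance⟩
  have hP : Tendsto P atTop (𝓝 P0) := by
    refine ProbabilityMeasure.tendsto_of_tendsto_charFun fun t => ?_
    simp only [P, P0, ProbabilityMeasure.coe_mk, aux_charFun_sum μ W hW hind hid]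
    have := aux_array_prod (charFun (μ.map (W 0))) (fun _ => 1)
      (fun s => norm_charFun_le_one s) (by simp) (fun t => |t|) (fun s => abs_nonneg s)
      ((aux_taylor_one μ (W 0) (hW 0) h2 h0).abs_right) (fun n j => c n j * t) (by
        intro δ hδ
        filter_upwards [hmax (δ / (|t| + 1)) (by positivity)] with n hn j hj
        rw [abs_mul]
        calc |c n j| * |t| ≤ δ / (|t| + 1) * (|t| + 1) := by
              gcongr
              · exact hn j hj
              · linarith
          _ = δ := by field_simp) (B * |t|) (by
        filter_upwards [hB] with n hn
        simp_rw [abs_mul, ← Finset.sum_mul]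
        gcongr)
    have h3 := this.add_const 1
    simpa using h3
  rw [ProbabilityMeasure.tendsto_iff_forall_integral_tendsto] at hP
  let f : BoundedContinuousFunction ℝ ℝ := BoundedContinuousFunction.ofNormedAddCommGroup
    (fun x => min 1 (|x| / ε)) (by fun_prop) 1 (fun x => by
      rw [Real.norm_eq_abs, abs_of_nonneg (by positivity)]; exact min_le_left _ _)
  have hf := hP f
  have hf0 : ∫ ω, f ω ∂(P0 : Measure ℝ) = 0 := by
    simp [P0, f]
  rw [hf0] at hf
  have hfn : ∀ n, ∫ ω, f ω ∂(P n : Measure ℝ)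
      = ∫ ω, f (∑ j ∈ Finset.range n, c n j * W j ω) ∂μ := by
    intro n
    simp only [P, ProbabilityMeasure.coe_mk]
    rw [integral_map (hmS n).aemeasurable f.continuous.aestronglyMeasurable]
  simp_rw [hfn] at hf
  have hf' := ENNReal.tendsto_ofReal hf
  rw [ENNReal.ofReal_zero] at hf'
  refine tendsto_of_tendsto_of_tendsto_of_le_of_le tendsto_const_nhds hf' (fun n => zero_le) ?_
  intro n
  have hfnn : ∀ x, 0 ≤ f x := fun x => by simp only [f, BoundedContinuousFunction.coe_ofNormedAddCommGroup]; positivity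
  have hint : Integrable (fun ω => f (∑ j ∈ Finset.range n, c n j * W j ω)) μ := by
    refine Integrable.of_bound (f.continuous.measurable.comp (hmS n)).aestronglyMeasurable 1
      (Eventually.of_forall fun ω => ?_)
    rw [Real.norm_eq_abs, abs_of_nonneg (hfnn _)]
    exact min_le_left _ _
  have hM := mul_meas_ge_le_integral_of_nonneg (Eventually.of_forall fun ω => hfnn _) hint 1
  rw [one_mul] at hM
  show μ _ ≤ ENNReal.ofReal _
  refine le_trans (measure_mono ?_) ((ENNReal.le_ofReal_iff_toReal_le (measure_ne_top _ _) (integral_nonneg fun ω => hfnn _)).2 hM)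
  intro ω hω
  simp only [Set.mem_ofPred_eq] at hω ⊢
  simp only [f, BoundedContinuousFunction.coe_ofNormedAddCommGroup]
  rw [le_min_iff]
  exact ⟨le_rfl, (one_le_div hε).2 hω⟩

lemma aux_matSqrt {ι : Type*} [Fintype ι] [DecidableEq ι] (Γ : Matrix ι ι ℝ)
    (h : Γ.PosSemidef) : (matSqrt Γ)ᵀ = matSqrt Γ ∧ matSqrt Γ * matSqrt Γ = Γ := by
  have hU : (star h.1.eigenvectorUnitary : Matrix ι ι ℝ) * (h.1.eigenvectorUnitary : Matrix ι ι ℝ) = 1 :=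
    Unitary.coe_star_mul_self _
  have hs := h.1.spectral_theorem
  rw [matSqrt, dif_pos h]
  constructor
  · have : ∀ M : Matrix ι ι ℝ, Mᵀ = star M := fun M => by
      rw [Matrix.star_eq_conjTranspose]; rfl
    rw [this, star_mul, star_mul, star_star, ← mul_assoc]
    congr 2
    rw [← this, diagonal_transpose]
  · have h1 : diagonal (Real.sqrt ∘ h.1.eigenvalues) * diagonal (Real.sqrt ∘ h.1.eigenvalues)
        = diagonal (h.1.eigenvalues) := by
      rw [diagonal_mul_diagonal]
      congr 1
      ext i
      exact Real.mul_self_sqrt (h.eigenvalues_nonneg i)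
    calc _ = (h.1.eigenvectorUnitary : Matrix ι ι ℝ) * (diagonal (Real.sqrt ∘ h.1.eigenvalues) *
        ((star h.1.eigenvectorUnitary : Matrix ι ι ℝ) * (h.1.eigenvectorUnitary : Matrix ι ι ℝ)) *
          diagonal (Real.sqrt ∘ h.1.eigenvalues)) * (star h.1.eigenvectorUnitary : Matrix ι ι ℝ) := by
          simp only [mul_assoc]
      _ = (h.1.eigenvectorUnitary : Matrix ι ι ℝ) * diagonal (h.1.eigenvalues) *
        (star h.1.eigenvectorUnitary : Matrix ι ι ℝ) := by rw [hU, mul_one, h1]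
      _ = Γ := by
          conv_rhs => rw [hs]
          rfl

instance aux_prob_std {ι : Type*} [Fintype ι] : IsProbabilityMeasure (stdGaussianPi ι) := by
  unfold stdGaussianPi; infer_instance

lemma aux_meas_mulVec {ι : Type*} [Fintype ι] (A : Matrix ι ι ℝ) :
    Measurable (fun z : ι → ℝ => A *ᵥ z) := by
  have : Continuous (fun z : ι → ℝ => A *ᵥ z) := by fun_prop
  exact this.measurable

instance aux_prob_gauss {ι : Type*} [Fintype ι] [DecidableEq ι] (Γ : Matrix ι ι ℝ) :
    IsProbabilityMeasure (gaussianPi Γ) := by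
  unfold gaussianPi; exact Measure.isProbabilityMeasure_map (aux_meas_mulVec _).aemeasurable

lemma aux_std_char {ι : Type*} [Fintype ι] (t : ι → ℝ) :
    ∫ z, Complex.exp ((∑ a, z a * t a : ℝ) * Complex.I) ∂(stdGaussianPi ι) =
      Complex.exp (-((∑ a, t a ^ 2) / 2 : ℝ)) := by
  have h := charFun_pi (μ := fun _ : ι => gaussianReal 0 1) (WithLp.toLp 2 t)
  rw [charFun_apply, integral_map (by fun_prop) (by fun_prop)] at h
  simp only [PiLp.inner_apply] at h
  unfold stdGaussianPi
  have e : ∀ z : ι → ℝ, ∑ a, z a * t a = ∑ i, inner ℝ (z i) (t i) := fun z => by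
    refine Finset.sum_congr rfl fun i _ => ?_
    simp [mul_comm]
  simp_rw [e]
  rw [h]
  simp_rw [charFun_gaussianReal]
  rw [← Complex.exp_sum]
  congr 1
  push_cast
  rw [Finset.sum_div, ← Finset.sum_neg_distrib]
  refine Finset.sum_congr rfl fun i _ => ?_
  simp

lemma aux_gauss_char {ι : Type*} [Fintype ι] [DecidableEq ι] (Γ : Matrix ι ι ℝ)
    (h : Γ.PosSemidef) (t : ι → ℝ) :
    ∫ z, Complex.exp ((∑ a, z a * t a : ℝ) * Complex.I) ∂(gaussianPi Γ) =
      Complex.exp (-((∑ a, ∑ b, t a * t b * Γ a b) / 2 : ℝ)) := by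
  obtain ⟨h1, h2⟩ := aux_matSqrt Γ h
  unfold gaussianPi
  have hcont : Continuous (fun z : ι → ℝ => Complex.exp ((∑ a, z a * t a : ℝ) * Complex.I)) := by
    fun_prop
  rw [integral_map (aux_meas_mulVec _).aemeasurable hcont.aestronglyMeasurable]
  have e : ∀ z : ι → ℝ, ∑ a, (matSqrt Γ *ᵥ z) a * t a = ∑ a, z a * (matSqrt Γ *ᵥ t) a := by
    intro z
    have := Matrix.dotProduct_mulVec z (matSqrt Γ) t
    rw [← Matrix.mulVec_transpose, h1] at this
    exact this.symm
  simp_rw [e]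
  rw [aux_std_char]
  congr 4
  have := Matrix.dotProduct_mulVec (matSqrt Γ *ᵥ t) (matSqrt Γ) t
  rw [← Matrix.mulVec_transpose, h1, Matrix.mulVec_mulVec, h2] at this
  simp only [dotProduct, Matrix.mulVec] at this
  simp only [pow_two]
  simp only [Matrix.mulVec, dotProduct]
  rw [this]
  refine Finset.sum_congr rfl fun a _ => ?_
  rw [Finset.sum_mul]
  refine Finset.sum_congr rfl fun b _ => ?_
  ring

lemma aux_levy {ι Ω : Type*} [Fintype ι] [DecidableEq ι] [MeasurableSpace Ω] (μ : Measure Ω)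
    [IsProbabilityMeasure μ] (Γ : Matrix ι ι ℝ)
    (h : Γ.PosSemidef) (Z : ℕ → Ω → ι → ℝ) (hZ : ∀ n, Measurable (Z n))
    (hc : ∀ t : ι → ℝ, Tendsto (fun n =>
      ∫ ω, Complex.exp ((∑ a, Z n ω a * t a : ℝ) * Complex.I) ∂μ) atTop
      (𝓝 (Complex.exp (-((∑ a, ∑ b, t a * t b * Γ a b) / 2 : ℝ))))) :
    _root_.TendstoInDistribution μ Z (gaussianPi Γ) := by
  have hZ' : ∀ n, Measurable (fun ω => WithLp.toLp 2 (Z n ω)) := fun n =>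
    (WithLp.measurable_toLp 2 _).comp (hZ n)
  let P : ℕ → ProbabilityMeasure (EuclideanSpace ℝ ι) := fun n =>
    ⟨μ.map (fun ω => WithLp.toLp 2 (Z n ω)),
      Measure.isProbabilityMeasure_map (hZ' n).aemeasurable⟩
  let P0 : ProbabilityMeasure (EuclideanSpace ℝ ι) := ⟨(gaussianPi Γ).map (WithLp.toLp 2),
    Measure.isProbabilityMeasure_map (WithLp.measurable_toLp 2 _).aemeasurable⟩
  have e : ∀ (z : ι → ℝ) (t : EuclideanSpace ℝ ι), inner ℝ (WithLp.toLp 2 z) t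
      = ∑ a, z a * t a := by
    intro z t
    rw [PiLp.inner_apply]
    refine Finset.sum_congr rfl fun i _ => ?_
    simp [mul_comm]
  have hP : Tendsto P atTop (𝓝 P0) := by
    refine ProbabilityMeasure.tendsto_of_tendsto_charFun fun t => ?_
    simp only [P, P0, ProbabilityMeasure.coe_mk, charFun_apply]
    rw [integral_map (WithLp.measurable_toLp 2 _).aemeasurable (by fun_prop)]
    simp_rw [e]
    rw [aux_gauss_char Γ h]
    refine (hc t).congr fun n => ?_
    rw [integral_map (hZ' n).aemeasurable (by fun_prop)]
  rw [ProbabilityMeasure.tendsto_iff_forall_integral_tendsto] at hP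
  intro f
  have := hP (f.compContinuous ⟨fun x : EuclideanSpace ℝ ι => WithLp.ofLp x, by fun_prop⟩)
  simp only [P, P0, ProbabilityMeasure.coe_mk] at this
  rw [integral_map (WithLp.measurable_toLp 2 _).aemeasurable
    (BoundedContinuousFunction.continuous _).aestronglyMeasurable] at this
  refine this.congr fun n => ?_
  rw [integral_map (hZ' n).aemeasurable
    (BoundedContinuousFunction.continuous _).aestronglyMeasurable]
  simp

lemma aux_max (f : ℕ → ℝ) (L : ℝ)
    (hf : Tendsto (fun n : ℕ => (n : ℝ)⁻¹ * ∑ j ∈ Finset.range n, f j ^ 2) atTop (𝓝 L))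
    (ε : ℝ) (hε : 0 < ε) : ∀ᶠ n : ℕ in atTop, ∀ j < n, |f j| ≤ ε * Real.sqrt n := by
  have h1 : Tendsto (fun n : ℕ => f n ^ 2 / ((n : ℝ) + 1)) atTop (𝓝 0) := by
    have ha := (tendsto_add_atTop_iff_nat 1).2 hf
    have hb : Tendsto (fun n : ℕ => (n : ℝ) / ((n : ℝ) + 1)) atTop (𝓝 1) :=
      tendsto_natCast_div_add_atTop (1 : ℝ)
    have hc := ha.sub (hb.mul hf)
    rw [one_mul, sub_self] at hc
    refine hc.congr' ?_
    filter_upwards [eventually_gt_atTop 0] with n hn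
    have hn' : (n : ℝ) ≠ 0 := by positivity
    rw [Finset.sum_range_succ]
    push_cast
    field_simp
    ring
  have h2 : ∀ᶠ n : ℕ in atTop, f n ^ 2 / ((n : ℝ) + 1) < ε ^ 2 :=
    h1.eventually (gt_mem_nhds (by positivity))
  obtain ⟨N, hN⟩ := eventually_atTop.1 h2
  have h3 : Tendsto (fun n : ℕ => ε ^ 2 * (n : ℝ)) atTop atTop :=
    tendsto_natCast_atTop_atTop.const_mul_atTop (by positivity)
  filter_upwards [h3.eventually_ge_atTop (∑ j ∈ Finset.range N, f j ^ 2)] with n hn j hj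
  have key : f j ^ 2 ≤ ε ^ 2 * n := by
    by_cases hjN : j < N
    · refine le_trans ?_ hn
      exact Finset.single_le_sum (f := fun j => f j ^ 2) (fun i _ => sq_nonneg (f i))
        (Finset.mem_range.2 hjN)
    · have := hN j (not_lt.1 hjN)
      rw [div_lt_iff₀ (by positivity)] at this
      refine this.le.trans ?_
      gcongr
      exact_mod_cast hj
  have : ε ^ 2 * (n : ℝ) = (ε * Real.sqrt n) ^ 2 := by
    rw [mul_pow, Real.sq_sqrt (by positivity)]
  rw [this] at key
  exact abs_le_of_sq_le_sq key (by positivity)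

lemma aux_cross (p q : ℕ → ℕ → ℝ) (L : ℝ)
    (hp : Tendsto (fun n : ℕ => (n : ℝ)⁻¹ * ∑ j ∈ Finset.range n, p n j ^ 2) atTop (𝓝 L))
    (hq : Tendsto (fun n : ℕ => (n : ℝ)⁻¹ * ∑ j ∈ Finset.range n, q n j ^ 2) atTop (𝓝 0)) :
    Tendsto (fun n : ℕ => (n : ℝ)⁻¹ * ∑ j ∈ Finset.range n, p n j * q n j) atTop (𝓝 0) := by
  have h := (hp.mul hq).sqrt
  rw [mul_zero, Real.sqrt_zero] at h
  refine squeeze_zero_norm (fun n => ?_) h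
  rw [Real.norm_eq_abs]
  apply Real.abs_le_sqrt
  have := Finset.sum_mul_sq_le_sq_mul_sq (Finset.range n) (p n) (q n)
  calc ((n : ℝ)⁻¹ * ∑ j ∈ Finset.range n, p n j * q n j) ^ 2
      = ((n : ℝ)⁻¹) ^ 2 * (∑ j ∈ Finset.range n, p n j * q n j) ^ 2 := by ring
    _ ≤ ((n : ℝ)⁻¹) ^ 2 * ((∑ j ∈ Finset.range n, p n j ^ 2) * ∑ j ∈ Finset.range n, q n j ^ 2) := by
        gcongr
    _ = _ := by ring

lemma aux_cov (f g : ℕ → ℝ) (r s : ℕ → ℕ → ℝ) (V F G : ℝ)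
    (hfg : Tendsto (fun n : ℕ => (n : ℝ)⁻¹ * ∑ j ∈ Finset.range n, f j * g j) atTop (𝓝 V))
    (hf : Tendsto (fun n : ℕ => (n : ℝ)⁻¹ * ∑ j ∈ Finset.range n, f j ^ 2) atTop (𝓝 F))
    (hg : Tendsto (fun n : ℕ => (n : ℝ)⁻¹ * ∑ j ∈ Finset.range n, g j ^ 2) atTop (𝓝 G))
    (hr : Tendsto (fun n : ℕ => (n : ℝ)⁻¹ * ∑ j ∈ Finset.range n, r n j ^ 2) atTop (𝓝 0))
    (hs : Tendsto (fun n : ℕ => (n : ℝ)⁻¹ * ∑ j ∈ Finset.range n, s n j ^ 2) atTop (𝓝 0)) :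
    Tendsto (fun n : ℕ => (n : ℝ)⁻¹ * ∑ j ∈ Finset.range n, (f j + r n j) * (g j + s n j))
      atTop (𝓝 V) := by
  have h1 := aux_cross (fun _ j => f j) s F hf hs
  have h2 := aux_cross (fun _ j => g j) r G hg hr
  have h3 := aux_cross r s 0 hr hs
  have h := ((hfg.add h1).add h2).add h3
  simp only [add_zero] at h
  refine h.congr fun n => ?_
  rw [← mul_add, ← mul_add, ← mul_add, ← Finset.sum_add_distrib, ← Finset.sum_add_distrib,
    ← Finset.sum_add_distrib]
  congr 1
  refine Finset.sum_congr rfl fun j _ => ?_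
  ring

lemma aux_max' (f : ℕ → ℝ) (r : ℕ → ℕ → ℝ) (F : ℝ)
    (hf : Tendsto (fun n : ℕ => (n : ℝ)⁻¹ * ∑ j ∈ Finset.range n, f j ^ 2) atTop (𝓝 F))
    (hr : Tendsto (fun n : ℕ => (n : ℝ)⁻¹ * ∑ j ∈ Finset.range n, r n j ^ 2) atTop (𝓝 0))
    (ε : ℝ) (hε : 0 < ε) : ∀ᶠ n : ℕ in atTop, ∀ j < n, |f j + r n j| ≤ ε * Real.sqrt n := by
  filter_upwards [aux_max f F hf (ε / 2) (by positivity),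
    hr.eventually (gt_mem_nhds (show (0 : ℝ) < (ε / 2) ^ 2 by positivity)),
    eventually_gt_atTop 0] with n h1 h2 hn j hj
  have h3 : r n j ^ 2 ≤ (ε / 2 * Real.sqrt n) ^ 2 := by
    rw [mul_pow, Real.sq_sqrt (by positivity)]
    have hn' : (0 : ℝ) < n := by exact_mod_cast hn
    rw [inv_mul_lt_iff₀ hn'] at h2
    have : r n j ^ 2 ≤ ∑ j ∈ Finset.range n, r n j ^ 2 :=
      Finset.single_le_sum (f := fun j => r n j ^ 2) (fun i _ => sq_nonneg (r n i))
        (Finset.mem_range.2 hj)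
    linarith
  have h4 := abs_le_of_sq_le_sq h3 (by positivity)
  have := abs_add_le (f j) (r n j)
  have := h1 j hj
  linarith

lemma aux_rem (u v : ℕ → ℝ) (ub vb d : ℕ → ℝ) (U V : ℝ)
    (hu : Tendsto (fun n : ℕ => (n : ℝ)⁻¹ * ∑ j ∈ Finset.range n, u j ^ 2) atTop (𝓝 U))
    (hv : Tendsto (fun n : ℕ => (n : ℝ)⁻¹ * ∑ j ∈ Finset.range n, v j ^ 2) atTop (𝓝 V))
    (hub : Tendsto ub atTop (𝓝 0)) (hvb : Tendsto vb atTop (𝓝 0)) (hd : Tendsto d atTop (𝓝 0)) :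
    Tendsto (fun n : ℕ => (n : ℝ)⁻¹ * ∑ j ∈ Finset.range n,
      (-(u j * vb n) - ub n * v j + ub n * vb n + d n) ^ 2) atTop (𝓝 0) := by
  have h := ((((hvb.pow 2).mul hu).add ((hub.pow 2).mul hv)).add
    (((hub.mul hvb).pow 2).add (hd.pow 2))).const_mul 4
  simp only [ne_eq, OfNat.ofNat_ne_zero, not_false_eq_true, zero_pow, zero_mul, add_zero,
    mul_zero] at h
  refine squeeze_zero' (Eventually.of_forall fun n => by positivity) ?_ h
  filter_upwards [eventually_gt_atTop 0] with n hn
  have hn' : (0 : ℝ) < n := by exact_mod_cast hn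
  have hle : ∑ j ∈ Finset.range n, (-(u j * vb n) - ub n * v j + ub n * vb n + d n) ^ 2
      ≤ ∑ j ∈ Finset.range n, 4 * (vb n ^ 2 * u j ^ 2 + ub n ^ 2 * v j ^ 2 +
        ((ub n * vb n) ^ 2 + d n ^ 2)) := by
    refine Finset.sum_le_sum fun j _ => ?_
    generalize ub n * vb n = x
    have e1 : vb n ^ 2 * u j ^ 2 = (u j * vb n) ^ 2 := by ring
    have e2 : ub n ^ 2 * v j ^ 2 = (ub n * v j) ^ 2 := by ring
    rw [e1, e2]
    generalize u j * vb n = y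
    generalize ub n * v j = z
    nlinarith [sq_nonneg (-y + z), sq_nonneg (-y - x), sq_nonneg (-y - d n), sq_nonneg (-z - x),
      sq_nonneg (-z - d n), sq_nonneg (x - d n)]
  refine (mul_le_mul_of_nonneg_left hle (by positivity)).trans_eq ?_
  rw [← Finset.mul_sum, Finset.sum_add_distrib, Finset.sum_add_distrib, ← Finset.mul_sum,
    ← Finset.mul_sum, Finset.sum_const, Finset.card_range, nsmul_eq_mul]
  field_simp

lemma aux_sqrt_inv (n : ℕ) : Real.sqrt n * (n : ℝ)⁻¹ = (Real.sqrt n)⁻¹ := by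
  rcases Nat.eq_zero_or_pos n with rfl | hn
  · simp
  · have hn' : (0 : ℝ) < n := by exact_mod_cast hn
    have h := Real.sqrt_pos.2 hn'
    nth_rewrite 2 [← Real.mul_self_sqrt hn'.le]
    field_simp

lemma aux_boot_clt {ι Ω' : Type*} [Fintype ι] [DecidableEq ι] [MeasurableSpace Ω']
    (ν : Measure Ω') [IsProbabilityMeasure ν]
    (w : ℕ → Ω' → ℝ) (hw : ∀ i, Measurable (w i))
    (hwindep : iIndepFun w ν)
    (hwident : ∀ i, IdentDistrib (w i) (w 0) ν ν)
    (hwint : Integrable (fun ω' => (w 0 ω') ^ 2) ν)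
    (hwmean : ∫ ω', w 0 ω' ∂ν = 0) (hwvar : ∫ ω', (w 0 ω') ^ 2 ∂ν = 1)
    (V : Matrix ι ι ℝ) (hV : V.PosSemidef) (a : ℕ → ℕ → ι → ℝ)
    (hmax : ∀ x, ∀ ε > 0, ∀ᶠ n : ℕ in atTop, ∀ j < n, |a n j x| ≤ ε * Real.sqrt n)
    (hcov : ∀ x y, Tendsto (fun n : ℕ => (n : ℝ)⁻¹ * ∑ j ∈ Finset.range n, a n j x * a n j y)
      atTop (𝓝 (V x y))) :
    _root_.TendstoInDistribution ν
      (fun n ω' => fun x => Real.sqrt n * ((n : ℝ)⁻¹ * ∑ j ∈ Finset.range n, w j ω' * a n j x))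
      (gaussianPi V) := by
  refine aux_levy ν V hV _ ?_ ?_
  · intro n
    refine measurable_pi_lambda _ fun x => ?_
    exact ((Finset.measurable_fun_sum _ fun j _ => (hw j).mul_const _).const_mul _).const_mul _
  intro t
  have h := aux_weighted_clt ν w hw hwindep hwident hwint hwmean 1 hwvar
    (fun n j => (Real.sqrt n)⁻¹ * ∑ x, t x * a n j x) ?_ (∑ x, ∑ y, t x * t y * V x y) ?_
  · rw [one_mul] at h
    refine h.congr fun n => ?_
    congr 1
    ext ω'
    congr 3
    simp_rw [← mul_assoc, aux_sqrt_inv, mul_assoc, ← Finset.mul_sum, Finset.sum_mul]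
    rw [Finset.sum_comm]
    congr 1
    refine Finset.sum_congr rfl fun x _ => ?_
    refine Finset.sum_congr rfl fun j _ => ?_
    ring
  · intro ε hε
    have hT : 0 < ε / (∑ x, |t x| + 1) := by positivity
    filter_upwards [eventually_all.2 fun x => hmax x _ hT, eventually_gt_atTop 0] with n hn hn0 j hj
    have hs : 0 < Real.sqrt n := Real.sqrt_pos.2 (by exact_mod_cast hn0)
    rw [abs_mul, abs_inv, abs_of_pos hs, inv_mul_le_iff₀ hs]
    calc |∑ x, t x * a n j x| ≤ ∑ x, |t x| * |a n j x| := by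
          refine (Finset.abs_sum_le_sum_abs _ _).trans_eq ?_
          simp_rw [abs_mul]
      _ ≤ ∑ x, |t x| * (ε / (∑ x, |t x| + 1) * Real.sqrt n) := by
          gcongr with x
          exact hn x j hj
      _ = (∑ x, |t x|) * (ε / (∑ x, |t x| + 1) * Real.sqrt n) := by rw [Finset.sum_mul]
      _ ≤ (∑ x, |t x| + 1) * (ε / (∑ x, |t x| + 1) * Real.sqrt n) := by
          gcongr; linarith
      _ = Real.sqrt n * ε := by
          have : (∑ x, |t x| + 1) ≠ 0 := by positivity
          field_simp
  · have h : Tendsto (fun n : ℕ => ∑ x, ∑ y, t x * t y * ((n : ℝ)⁻¹ *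
        ∑ j ∈ Finset.range n, a n j x * a n j y)) atTop (𝓝 (∑ x, ∑ y, t x * t y * V x y)) :=
      tendsto_finsetSum _ fun x _ => tendsto_finsetSum _ fun y _ => (hcov x y).const_mul _
    refine h.congr fun n => ?_
    have e : ∀ j, ((Real.sqrt n)⁻¹ * ∑ x, t x * a n j x) ^ 2 =
        ∑ x, ∑ y, (t x * t y * (n : ℝ)⁻¹) * (a n j x * a n j y) := by
      intro j
      rw [mul_pow, inv_pow, Real.sq_sqrt (by positivity), pow_two, Finset.sum_mul_sum,
        Finset.mul_sum]
      refine Finset.sum_congr rfl fun x _ => ?_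
      rw [Finset.mul_sum]
      refine Finset.sum_congr rfl fun y _ => ?_
      ring
    simp_rw [e]
    symm
    rw [Finset.sum_comm]
    refine Finset.sum_congr rfl fun x _ => ?_
    rw [Finset.sum_comm]
    refine Finset.sum_congr rfl fun y _ => ?_
    rw [← Finset.mul_sum]
    ring

lemma aux_boot_var {ι Ω' : Type*} [Fintype ι] [MeasurableSpace Ω']
    (ν : Measure Ω') [IsProbabilityMeasure ν]
    (w : ℕ → Ω' → ℝ) (hw : ∀ i, Measurable (w i))
    (hwindep : iIndepFun w ν)
    (hwident : ∀ i, IdentDistrib (w i) (w 0) ν ν)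
    (hwint : Integrable (fun ω' => (w 0 ω') ^ 2) ν)
    (hwmean : ∫ ω', w 0 ω' ∂ν = 0) (hwvar : ∫ ω', (w 0 ω') ^ 2 ∂ν = 1)
    (V : ι → ι → ℝ) (a : ℕ → ℕ → ι → ℝ)
    (hmax : ∀ x, ∀ ε > 0, ∀ᶠ n : ℕ in atTop, ∀ j < n, |a n j x| ≤ ε * Real.sqrt n)
    (hcov : ∀ x y, Tendsto (fun n : ℕ => (n : ℝ)⁻¹ * ∑ j ∈ Finset.range n, a n j x * a n j y)
      atTop (𝓝 (V x y)))
    (S : ℕ → Ω' → ι → ι → ℝ)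
    (hS : ∀ n ω' x y, S n ω' x y = (n : ℝ)⁻¹ * ∑ j ∈ Finset.range n,
      (w j ω' * a n j x - (n : ℝ)⁻¹ * ∑ k ∈ Finset.range n, w k ω' * a n k x) *
      (w j ω' * a n j y - (n : ℝ)⁻¹ * ∑ k ∈ Finset.range n, w k ω' * a n k y)) :
    _root_.TendstoInProbability ν S V := by
  have hw1 : Integrable (w 0) ν :=
    ((memLp_two_iff_integrable_sq (hw 0).aestronglyMeasurable).2 hwint).integrable one_le_two
  -- bound on the mean of squares
  have hB : ∀ x, ∀ᶠ n : ℕ in atTop, (n : ℝ)⁻¹ * ∑ j ∈ Finset.range n, a n j x ^ 2 ≤ V x x + 1 := by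
    intro x
    filter_upwards [(hcov x x).eventually (gt_mem_nhds (lt_add_one _))] with n hn
    simp_rw [pow_two]
    exact hn.le
  -- the bootstrap mean tends to zero
  have hmean : ∀ x, ∀ ε > 0, Tendsto (fun n : ℕ => ν {ω' | ε ≤ |∑ j ∈ Finset.range n,
      ((n : ℝ)⁻¹ * a n j x) * w j ω'|}) atTop (𝓝 0) := by
    intro x ε hε
    refine aux_weighted_wlln ν w hw hwindep hwident hw1 hwmean
      (fun n j => (n : ℝ)⁻¹ * a n j x) ?_ ((V x x + 1 + 1) / 2) ?_ ε hε
    · intro δ hδ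
      filter_upwards [hmax x δ hδ, eventually_gt_atTop 0] with n hn hn0 j hj
      have hn' : (0 : ℝ) < n := by exact_mod_cast hn0
      rw [abs_mul, abs_inv, abs_of_pos hn', inv_mul_le_iff₀ hn']
      refine (hn j hj).trans ?_
      rw [mul_comm]
      gcongr
      rw [Real.sqrt_le_left hn'.le]
      have : (1 : ℝ) ≤ n := by exact_mod_cast hn0
      nlinarith
    · filter_upwards [hB x, eventually_gt_atTop 0] with n hn hn0
      have hn' : (0 : ℝ) < n := by exact_mod_cast hn0
      calc ∑ j ∈ Finset.range n, |(n : ℝ)⁻¹ * a n j x|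
          ≤ ∑ j ∈ Finset.range n, (n : ℝ)⁻¹ * ((a n j x ^ 2 + 1) / 2) := by
            refine Finset.sum_le_sum fun j _ => ?_
            rw [abs_mul, abs_inv, abs_of_pos hn']
            gcongr
            rw [← sq_abs (a n j x)]
            nlinarith [sq_nonneg (|a n j x| - 1)]
        _ = ((n : ℝ)⁻¹ * ∑ j ∈ Finset.range n, a n j x ^ 2 + 1) / 2 := by
            rw [← Finset.mul_sum, ← Finset.sum_div, Finset.sum_add_distrib]
            simp
            field_simp
        _ ≤ _ := by linarith
  -- weighted law of large numbers for the squares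
  have hsq : ∀ x y, ∀ ε > 0, Tendsto (fun n : ℕ => ν {ω' | ε ≤ |∑ j ∈ Finset.range n,
      ((n : ℝ)⁻¹ * (a n j x * a n j y)) * (w j ω' ^ 2 - 1)|}) atTop (𝓝 0) := by
    intro x y ε hε
    have hmm : Measurable (fun z : ℝ => z ^ 2 - 1) := by fun_prop
    refine aux_weighted_wlln ν (fun j ω' => w j ω' ^ 2 - 1) (fun j => hmm.comp (hw j))
      (hwindep.comp (fun _ z => z ^ 2 - 1) (fun _ => hmm)) (fun i => (hwident i).comp hmm)
      (hwint.sub (integrable_const 1)) ?_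
      (fun n j => (n : ℝ)⁻¹ * (a n j x * a n j y)) ?_ ((V x x + 1 + (V y y + 1)) / 2) ?_ ε hε
    · rw [integral_sub hwint (integrable_const 1), hwvar]
      simp
    · intro δ hδ
      filter_upwards [hmax x _ (Real.sqrt_pos.2 hδ), hmax y _ (Real.sqrt_pos.2 hδ),
        eventually_gt_atTop 0] with n hn1 hn2 hn0 j hj
      have hn' : (0 : ℝ) < n := by exact_mod_cast hn0
      rw [abs_mul, abs_inv, abs_of_pos hn', inv_mul_le_iff₀ hn', abs_mul]
      refine (mul_le_mul (hn1 j hj) (hn2 j hj) (abs_nonneg _) (by positivity)).trans_eq ?_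
      have e1 := Real.mul_self_sqrt hδ.le
      have e2 := Real.mul_self_sqrt hn'.le
      calc Real.sqrt δ * Real.sqrt n * (Real.sqrt δ * Real.sqrt n)
          = (Real.sqrt n * Real.sqrt n) * (Real.sqrt δ * Real.sqrt δ) := by ring
        _ = _ := by rw [e1, e2]
    · filter_upwards [hB x, hB y, eventually_gt_atTop 0] with n hn1 hn2 hn0
      have hn' : (0 : ℝ) < n := by exact_mod_cast hn0
      calc ∑ j ∈ Finset.range n, |(n : ℝ)⁻¹ * (a n j x * a n j y)|
          ≤ ∑ j ∈ Finset.range n, (n : ℝ)⁻¹ * ((a n j x ^ 2 + a n j y ^ 2) / 2) := by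
            refine Finset.sum_le_sum fun j _ => ?_
            rw [abs_mul, abs_inv, abs_of_pos hn', abs_mul]
            gcongr
            rw [← sq_abs (a n j x), ← sq_abs (a n j y)]
            nlinarith [sq_nonneg (|a n j x| - |a n j y|)]
        _ = ((n : ℝ)⁻¹ * ∑ j ∈ Finset.range n, a n j x ^ 2 +
              (n : ℝ)⁻¹ * ∑ j ∈ Finset.range n, a n j y ^ 2) / 2 := by
            rw [← Finset.mul_sum, ← Finset.sum_div, Finset.sum_add_distrib]
            ring
        _ ≤ _ := by linarith
  -- coordinatewise
  have hS' : ∀ n ω' x y, S n ω' x y =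
      (∑ j ∈ Finset.range n, ((n : ℝ)⁻¹ * (a n j x * a n j y)) * (w j ω' ^ 2 - 1))
      + (n : ℝ)⁻¹ * ∑ j ∈ Finset.range n, a n j x * a n j y
      - (∑ j ∈ Finset.range n, ((n : ℝ)⁻¹ * a n j x) * w j ω') *
        (∑ j ∈ Finset.range n, ((n : ℝ)⁻¹ * a n j y) * w j ω') := by
    intro n ω' x y
    rw [hS]
    have e : ∀ x, ∑ j ∈ Finset.range n, ((n : ℝ)⁻¹ * a n j x) * w j ω' =
        (n : ℝ)⁻¹ * ∑ k ∈ Finset.range n, w k ω' * a n k x := by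
      intro x
      rw [Finset.mul_sum]
      exact Finset.sum_congr rfl fun j _ => by ring
    rw [e, e, Finset.mul_sum (Finset.range n) (fun j => a n j x * a n j y),
      ← Finset.sum_add_distrib]
    rcases Nat.eq_zero_or_pos n with rfl | hn0
    · simp
    have hn' : (n : ℝ) ≠ 0 := by positivity
    set p := ∑ k ∈ Finset.range n, w k ω' * a n k x with hp
    set q := ∑ k ∈ Finset.range n, w k ω' * a n k y with hq
    have e2 : ∑ j ∈ Finset.range n, (w j ω' * a n j x - (n : ℝ)⁻¹ * p) *
        (w j ω' * a n j y - (n : ℝ)⁻¹ * q) =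
        ∑ j ∈ Finset.range n, (w j ω' * a n j x) * (w j ω' * a n j y)
        - (n : ℝ)⁻¹ * p * q := by
      have : ∀ j, (w j ω' * a n j x - (n : ℝ)⁻¹ * p) * (w j ω' * a n j y - (n : ℝ)⁻¹ * q) =
        (w j ω' * a n j x) * (w j ω' * a n j y) - (n : ℝ)⁻¹ * q * (w j ω' * a n j x)
        - (n : ℝ)⁻¹ * p * (w j ω' * a n j y) + ((n : ℝ)⁻¹ * p) * ((n : ℝ)⁻¹ * q) := fun j => by ring
      simp_rw [this]
      rw [Finset.sum_add_distrib, Finset.sum_sub_distrib, Finset.sum_sub_distrib,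
        ← Finset.mul_sum, ← Finset.mul_sum, ← hp, ← hq, Finset.sum_const, Finset.card_range,
        nsmul_eq_mul]
      field_simp
      ring
    rw [e2, mul_sub, Finset.mul_sum]
    congr 1
    · exact Finset.sum_congr rfl fun j _ => by ring
    · ring
  have hcoord : ∀ x y, ∀ ε > 0, Tendsto (fun n : ℕ => ν {ω' | ε ≤ |S n ω' x y - V x y|})
      atTop (𝓝 0) := by
    intro x y ε hε
    have h1 := hsq x y (ε / 3) (by positivity)
    have h2 := hmean x (ε / 3) (by positivity)
    have h3 := hmean y 1 one_pos
    have h := (h1.add h2).add h3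
    simp only [add_zero] at h
    refine tendsto_of_tendsto_of_tendsto_of_le_of_le' tendsto_const_nhds h
      (Eventually.of_forall fun n => zero_le) ?_
    have hd := Metric.tendsto_nhds.1 (hcov x y) (ε / 3) (by positivity)
    filter_upwards [hd] with n hn
    refine le_trans (measure_mono ?_) ((measure_union_le _ _).trans
      (add_le_add (measure_union_le _ _) le_rfl))
    intro ω' hω'
    by_contra hcon
    simp only [Set.mem_union, Set.mem_ofPred_eq, not_or, not_le] at hcon hω'
    obtain ⟨⟨c1, c2⟩, c3⟩ := hcon
    rw [hS'] at hω'
    rw [Real.dist_eq] at hn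
    set A := ∑ j ∈ Finset.range n, ((n : ℝ)⁻¹ * (a n j x * a n j y)) * (w j ω' ^ 2 - 1)
    set D := (n : ℝ)⁻¹ * ∑ j ∈ Finset.range n, a n j x * a n j y
    set p := ∑ j ∈ Finset.range n, ((n : ℝ)⁻¹ * a n j x) * w j ω'
    set q := ∑ j ∈ Finset.range n, ((n : ℝ)⁻¹ * a n j y) * w j ω'
    have hpq : |p * q| ≤ ε / 3 := by
      rw [abs_mul]
      nlinarith [abs_nonneg p, abs_nonneg q]
    have t1 := abs_sub (A + (D - V x y)) (p * q)
    have t2 := abs_add_le A (D - V x y)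
    have e : A + D - p * q - V x y = A + (D - V x y) - p * q := by ring
    rw [e] at hω'
    linarith
  intro ε hε
  have h : Tendsto (fun n : ℕ => ∑ x, ∑ y, ν {ω' | ε ≤ |S n ω' x y - V x y|}) atTop (𝓝 0) := by
    have := tendsto_finsetSum (Finset.univ : Finset ι) fun x _ =>
      tendsto_finsetSum (Finset.univ : Finset ι) fun y _ => hcoord x y ε hε
    simpa using this
  refine tendsto_of_tendsto_of_tendsto_of_le_of_le tendsto_const_nhds h
      (fun n => zero_le) ?_
  intro n
  show ν _ ≤ ∑ x, ∑ y, ν {ω' | ε ≤ |S n ω' x y - V x y|}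
  calc ν {ω' | ε ≤ dist (S n ω') V} ≤ ν (⋃ x, ⋃ y, {ω' | ε ≤ |S n ω' x y - V x y|}) := by
        refine measure_mono ?_
        intro ω' hω'
        by_contra hcon
        simp only [Set.mem_iUnion, Set.mem_ofPred_eq, not_exists, not_le] at hcon hω'
        refine absurd hω' (not_le.2 ?_)
        rw [dist_pi_lt_iff hε]
        intro x
        rw [dist_pi_lt_iff hε]
        intro y
        rw [Real.dist_eq]
        exact hcon x y
    _ ≤ ∑ x, ν (⋃ y, {ω' | ε ≤ |S n ω' x y - V x y|}) := measure_iUnion_fintype_le _ _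
    _ ≤ _ := Finset.sum_le_sum fun x _ => measure_iUnion_fintype_le _ _

lemma aux_slln {Ω S : Type*} [MeasurableSpace Ω] [MeasurableSpace S] (μ : Measure Ω)
    [IsProbabilityMeasure μ] (Z : ℕ → Ω → S) (hind : iIndepFun Z μ)
    (hid : ∀ i, IdentDistrib (Z i) (Z 0) μ μ) (g : S → ℝ) (hg : Measurable g)
    (hint : Integrable (fun ω => g (Z 0 ω)) μ) :
    ∀ᵐ ω ∂μ, Tendsto (fun n : ℕ => (n : ℝ)⁻¹ * ∑ j ∈ Finset.range n, g (Z j ω)) atTop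
      (𝓝 (∫ ω, g (Z 0 ω) ∂μ)) := by
  have hi := hind.comp (fun _ => g) (fun _ => hg)
  have h := strong_law_ae_real (fun j ω => g (Z j ω)) hint
    (fun i j hij => hi.indepFun hij) (fun i => (hid i).comp hg)
  filter_upwards [h] with ω hω
  refine hω.congr fun n => ?_
  rw [div_eq_inv_mul]

lemma aux_meansq {Ω : Type*} [MeasurableSpace Ω] (μ : Measure Ω) [IsProbabilityMeasure μ]
    (W : ℕ → Ω → ℝ) (hW : ∀ i, Measurable (W i)) (hind : iIndepFun W μ)
    (hid : ∀ i, IdentDistrib (W i) (W 0) μ μ)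
    (h2 : MemLp (W 0) 2 μ) (h0 : ∫ ω, W 0 ω ∂μ = 0) (n : ℕ) :
    MemLp (fun ω => (n : ℝ)⁻¹ * ∑ j ∈ Finset.range n, W j ω) 2 μ ∧
    ∫ ω, ((n : ℝ)⁻¹ * ∑ j ∈ Finset.range n, W j ω) ^ 2 ∂μ
      = (n : ℝ)⁻¹ * ∫ ω, W 0 ω ^ 2 ∂μ := by
  have hm : ∀ i, MemLp (W i) 2 μ := fun i => (hid i).symm.memLp_snd h2
  have hmz : ∀ i, ∫ ω, W i ω ∂μ = 0 := fun i => ((hid i).integral_eq).trans h0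
  have hms : MemLp (fun ω => ∑ j ∈ Finset.range n, W j ω) 2 μ :=
    memLp_finsetSum _ fun i _ => hm i
  refine ⟨hms.const_mul _, ?_⟩
  have hv := IndepFun.variance_sum (X := W) (μ := μ) (s := Finset.range n) (fun i _ => hm i)
    (fun i _ j _ hij => hind.indepFun hij)
  have hvi : ∀ i, variance (W i) μ = ∫ ω, W 0 ω ^ 2 ∂μ := fun i => by
    rw [(hid i).variance_eq, variance_of_integral_eq_zero (hW 0).aemeasurable h0]
  have e : (∑ i ∈ Finset.range n, W i) = fun ω => ∑ j ∈ Finset.range n, W j ω := by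
    ext ω; simp
  rw [e, variance_of_integral_eq_zero hms.aestronglyMeasurable.aemeasurable] at hv
  · simp_rw [mul_pow]
    rw [integral_const_mul, hv]
    simp_rw [hvi]
    rw [Finset.sum_const, Finset.card_range, nsmul_eq_mul]
    rcases Nat.eq_zero_or_pos n with rfl | hn
    · simp
    · have : (n : ℝ) ≠ 0 := by positivity
      field_simp
  · rw [integral_finsetSum _ fun i _ => (hm i).integrable one_le_two]
    simp [hmz]

lemma aux_perturb {Ω : Type*} [MeasurableSpace Ω] (μ : Measure Ω) [IsProbabilityMeasure μ]
    (A R : Ω → ℝ) (hA : Measurable A) (hR : Integrable R μ) (hRm : Measurable R) :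
    ‖∫ ω, Complex.exp ((A ω + R ω : ℝ) * Complex.I) ∂μ - ∫ ω, Complex.exp ((A ω : ℝ) * Complex.I) ∂μ‖
      ≤ ∫ ω, |R ω| ∂μ := by
  have hi : ∀ B : Ω → ℝ, Measurable B →
      Integrable (fun ω => Complex.exp ((B ω : ℝ) * Complex.I)) μ := by
    intro B hB
    refine Integrable.of_bound (C := 1) ?_ (Eventually.of_forall fun ω => ?_)
    · exact (Complex.measurable_exp.comp ((Complex.measurable_ofReal.comp hB).mul_const _)).aestronglyMeasurable
    · rw [Complex.norm_exp_ofReal_mul_I]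
  rw [← integral_sub (hi (fun ω => A ω + R ω) (hA.add hRm)) (hi _ hA)]
  refine norm_integral_le_of_norm_le hR.abs (Eventually.of_forall fun ω => ?_)
  have e : Complex.exp ((A ω + R ω : ℝ) * Complex.I) - Complex.exp ((A ω : ℝ) * Complex.I)
      = Complex.exp ((A ω : ℝ) * Complex.I) * (Complex.exp (Complex.I * (R ω : ℝ)) - 1) := by
    rw [mul_sub, ← Complex.exp_add]
    congr 2
    · push_cast; ring
    · ring
  rw [e, norm_mul, Complex.norm_exp_ofReal_mul_I, one_mul]
  exact Real.norm_exp_I_mul_ofReal_sub_one_le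

lemma aux_part1 {ι Ω S : Type*} [Fintype ι] [DecidableEq ι] [MeasurableSpace Ω]
    [MeasurableSpace S] (μ : Measure Ω)
    [IsProbabilityMeasure μ] (Z : ℕ → Ω → S) (hZ : ∀ i, Measurable (Z i)) (hind : iIndepFun Z μ)
    (hid : ∀ i, IdentDistrib (Z i) (Z 0) μ μ) (f u v : ι → S → ℝ)
    (hf : ∀ x, Measurable (f x)) (hu : ∀ x, Measurable (u x)) (hv : ∀ x, Measurable (v x))
    (hf2 : ∀ x, MemLp (fun ω => f x (Z 0 ω)) 2 μ) (hu2 : ∀ x, MemLp (fun ω => u x (Z 0 ω)) 2 μ)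
    (hv2 : ∀ x, MemLp (fun ω => v x (Z 0 ω)) 2 μ)
    (hf0 : ∀ x, ∫ ω, f x (Z 0 ω) ∂μ = 0) (hu0 : ∀ x, ∫ ω, u x (Z 0 ω) ∂μ = 0)
    (hv0 : ∀ x, ∫ ω, v x (Z 0 ω) ∂μ = 0)
    (V : Matrix ι ι ℝ) (hV : V.PosSemidef)
    (hVf : ∀ x y, V x y = ∫ ω, f x (Z 0 ω) * f y (Z 0 ω) ∂μ) :
    _root_.TendstoInDistribution μ
      (fun n ω => fun x => Real.sqrt n * ((n : ℝ)⁻¹ * ∑ j ∈ Finset.range n, f x (Z j ω) -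
        ((n : ℝ)⁻¹ * ∑ j ∈ Finset.range n, u x (Z j ω)) *
        ((n : ℝ)⁻¹ * ∑ j ∈ Finset.range n, v x (Z j ω))))
      (gaussianPi V) := by
  have hms : ∀ (g : S → ℝ), Measurable g → ∀ n : ℕ,
      Measurable (fun ω => (n : ℝ)⁻¹ * ∑ j ∈ Finset.range n, g (Z j ω)) := fun g hg n =>
    (Finset.measurable_fun_sum _ fun j _ => hg.comp (hZ j)).const_mul _
  refine aux_levy μ V hV _ ?_ ?_
  · intro n
    refine measurable_pi_lambda _ fun x => ?_
    exact ((hms _ (hf x) n).sub ((hms _ (hu x) n).mul (hms _ (hv x) n))).const_mul _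
  intro t
  -- main term
  have hgm : Measurable (fun s => ∑ x, t x * f x s) :=
    Finset.measurable_fun_sum _ fun x _ => (hf x).const_mul _
  have hg2 : MemLp (fun ω => ∑ x, t x * f x (Z 0 ω)) 2 μ :=
    memLp_finsetSum _ fun x _ => (hf2 x).const_mul _
  have hmain := aux_weighted_clt μ (fun j ω => ∑ x, t x * f x (Z j ω)) (fun j => hgm.comp (hZ j))
    (hind.comp (fun _ s => ∑ x, t x * f x s) (fun _ => hgm)) (fun i => (hid i).comp hgm)
    hg2.integrable_sq (by
      rw [integral_finsetSum _ fun x _ => ((hf2 x).const_mul _).integrable one_le_two]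
      simp_rw [integral_const_mul, hf0]
      simp) (∑ x, ∑ y, t x * t y * V x y) (by
      have e : ∀ ω, (∑ x, t x * f x (Z 0 ω)) ^ 2 =
          ∑ x, ∑ y, t x * t y * (f x (Z 0 ω) * f y (Z 0 ω)) := by
        intro ω
        rw [pow_two, Finset.sum_mul_sum]
        refine Finset.sum_congr rfl fun x _ => Finset.sum_congr rfl fun y _ => ?_
        ring
      have hi : ∀ x y, Integrable (fun ω => t x * t y * (f x (Z 0 ω) * f y (Z 0 ω))) μ :=
        fun x y => ((hf2 x).integrable_mul (hf2 y)).const_mul _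
      simp_rw [e]
      rw [integral_finsetSum _ fun x _ => integrable_finsetSum _ fun y _ => hi x y]
      refine Finset.sum_congr rfl fun x _ => ?_
      rw [integral_finsetSum _ fun y _ => hi x y]
      refine Finset.sum_congr rfl fun y _ => ?_
      rw [integral_const_mul, hVf]) (fun n _ => (Real.sqrt n)⁻¹) (by
      intro ε hε
      have : Tendsto (fun n : ℕ => (Real.sqrt n)⁻¹) atTop (𝓝 0) :=
        tendsto_inv_atTop_zero.comp (Real.tendsto_sqrt_atTop.comp tendsto_natCast_atTop_atTop)
      filter_upwards [this.eventually (gt_mem_nhds hε)] with n hn j _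
      rw [abs_of_nonneg (by positivity)]
      exact hn.le) 1 (by
      refine tendsto_const_nhds.congr' ?_
      filter_upwards [eventually_gt_atTop 0] with n hn
      have hn' : (n : ℝ) ≠ 0 := by positivity
      rw [Finset.sum_const, Finset.card_range, inv_pow, Real.sq_sqrt (by positivity), nsmul_eq_mul]
      field_simp)
  rw [mul_one] at hmain
  -- remainder
  let R : ℕ → Ω → ℝ := fun n ω => ∑ x, -(t x * Real.sqrt n) *
    (((n : ℝ)⁻¹ * ∑ j ∈ Finset.range n, u x (Z j ω)) *
        ((n : ℝ)⁻¹ * ∑ j ∈ Finset.range n, v x (Z j ω)))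
  have hus := fun (x : ι) (n : ℕ) => aux_meansq μ (fun j ω => u x (Z j ω)) (fun j => (hu x).comp (hZ j))
    (hind.comp (fun _ s => u x s) (fun _ => hu x)) (fun i => (hid i).comp (hu x)) (hu2 x) (hu0 x) n
  have hvs := fun (x : ι) (n : ℕ) => aux_meansq μ (fun j ω => v x (Z j ω)) (fun j => (hv x).comp (hZ j))
    (hind.comp (fun _ s => v x s) (fun _ => hv x)) (fun i => (hid i).comp (hv x)) (hv2 x) (hv0 x) n
  have hRm : ∀ n, Measurable (R n) := fun n =>
    Finset.measurable_fun_sum _ fun x _ => ((hms _ (hu x) n).mul (hms _ (hv x) n)).const_mul _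
  have hRi1 : ∀ (n : ℕ) x, Integrable (fun ω => ((n : ℝ)⁻¹ * ∑ j ∈ Finset.range n, u x (Z j ω)) *
        ((n : ℝ)⁻¹ * ∑ j ∈ Finset.range n, v x (Z j ω))) μ := fun n x =>
    (hus x n).1.integrable_mul (hvs x n).1
  have hRi : ∀ n, Integrable (R n) μ := fun n =>
    integrable_finsetSum _ fun x _ => (hRi1 n x).const_mul _
  have hRb : ∀ n : ℕ, ∫ ω, |R n ω| ∂μ ≤ (Real.sqrt n)⁻¹ *
      ∑ x, |t x| * ((∫ ω, u x (Z 0 ω) ^ 2 ∂μ + ∫ ω, v x (Z 0 ω) ^ 2 ∂μ) / 2) := by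
    intro n
    have hbi : ∀ x, Integrable (fun ω => |t x| * Real.sqrt n *
        ((((n : ℝ)⁻¹ * ∑ j ∈ Finset.range n, u x (Z j ω)) ^ 2 +
        ((n : ℝ)⁻¹ * ∑ j ∈ Finset.range n, v x (Z j ω)) ^ 2) / 2)) μ := fun x =>
      (((hus x n).1.integrable_sq.add (hvs x n).1.integrable_sq).div_const 2).const_mul _
    calc ∫ ω, |R n ω| ∂μ ≤ ∫ ω, ∑ x, |t x| * Real.sqrt n *
        ((((n : ℝ)⁻¹ * ∑ j ∈ Finset.range n, u x (Z j ω)) ^ 2 +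
        ((n : ℝ)⁻¹ * ∑ j ∈ Finset.range n, v x (Z j ω)) ^ 2) / 2) ∂μ := by
          refine integral_mono (hRi n).abs (integrable_finsetSum _ fun x _ => hbi x) fun ω => ?_
          refine (Finset.abs_sum_le_sum_abs _ _).trans (Finset.sum_le_sum fun x _ => ?_)
          generalize (n : ℝ)⁻¹ * ∑ j ∈ Finset.range n, u x (Z j ω) = p
          generalize (n : ℝ)⁻¹ * ∑ j ∈ Finset.range n, v x (Z j ω) = q
          rw [abs_mul, abs_neg, abs_mul, abs_of_nonneg (Real.sqrt_nonneg _), abs_mul]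
          gcongr
          rw [← sq_abs p, ← sq_abs q]
          nlinarith [sq_nonneg (|p| - |q|)]
      _ = ∑ x, |t x| * Real.sqrt n * (((n : ℝ)⁻¹ * ∫ ω, u x (Z 0 ω) ^ 2 ∂μ +
            (n : ℝ)⁻¹ * ∫ ω, v x (Z 0 ω) ^ 2 ∂μ) / 2) := by
          rw [integral_finsetSum _ fun x _ => hbi x]
          refine Finset.sum_congr rfl fun x _ => ?_
          rw [integral_const_mul, integral_div,
            integral_add (hus x n).1.integrable_sq (hvs x n).1.integrable_sq, (hus x n).2,
            (hvs x n).2]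
      _ = _ := by
          rw [Finset.mul_sum]
          refine Finset.sum_congr rfl fun x _ => ?_
          rw [← aux_sqrt_inv]
          ring
  have hlim : Tendsto (fun n : ℕ => (Real.sqrt n)⁻¹ *
      ∑ x, |t x| * ((∫ ω, u x (Z 0 ω) ^ 2 ∂μ + ∫ ω, v x (Z 0 ω) ^ 2 ∂μ) / 2)) atTop (𝓝 0) := by
    have : Tendsto (fun n : ℕ => (Real.sqrt n)⁻¹) atTop (𝓝 0) :=
      tendsto_inv_atTop_zero.comp (Real.tendsto_sqrt_atTop.comp tendsto_natCast_atTop_atTop)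
    simpa using this.mul_const _
  have hdiff := squeeze_zero_norm (fun n => (aux_perturb μ
    (fun ω => ∑ j ∈ Finset.range n, (Real.sqrt n)⁻¹ * ∑ x, t x * f x (Z j ω)) (R n)
    (Finset.measurable_fun_sum _ fun j _ => (hgm.comp (hZ j)).const_mul _) (hRi n) (hRm n)).trans
      (hRb n)) hlim
  have hfin := hdiff.add hmain
  rw [zero_add] at hfin
  refine hfin.congr fun n => ?_
  rw [sub_add_cancel]
  congr 1
  ext ω
  congr 3
  simp only [R]
  simp_rw [← Finset.mul_sum]
  rw [Finset.sum_comm, Finset.mul_sum, ← Finset.sum_add_distrib]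
  refine Finset.sum_congr rfl fun x _ => ?_
  rw [← aux_sqrt_inv, ← Finset.mul_sum]
  ring

lemma aux_alg (p q : ℕ → ℝ) (P Q C : ℝ) (n : ℕ) (hn : 0 < n) :
    (∀ j, (p j - (n : ℝ)⁻¹ * ∑ k ∈ Finset.range n, p k) *
      (q j - (n : ℝ)⁻¹ * ∑ k ∈ Finset.range n, q k) = (p j - P) * (q j - Q) +
      (-((p j - P) * ((n : ℝ)⁻¹ * ∑ k ∈ Finset.range n, (q k - Q)))
        - ((n : ℝ)⁻¹ * ∑ k ∈ Finset.range n, (p k - P)) * (q j - Q)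
        + ((n : ℝ)⁻¹ * ∑ k ∈ Finset.range n, (p k - P)) *
          ((n : ℝ)⁻¹ * ∑ k ∈ Finset.range n, (q k - Q)))) ∧
    (n : ℝ)⁻¹ * ∑ j ∈ Finset.range n, (p j - (n : ℝ)⁻¹ * ∑ k ∈ Finset.range n, p k) *
      (q j - (n : ℝ)⁻¹ * ∑ k ∈ Finset.range n, q k) - C =
      (n : ℝ)⁻¹ * ∑ j ∈ Finset.range n, ((p j - P) * (q j - Q) - C) -
      ((n : ℝ)⁻¹ * ∑ k ∈ Finset.range n, (p k - P)) *
          ((n : ℝ)⁻¹ * ∑ k ∈ Finset.range n, (q k - Q)) := by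
  have hn' : (n : ℝ) ≠ 0 := by positivity
  have e : ∀ (p : ℕ → ℝ) (P : ℝ), (n : ℝ)⁻¹ * ∑ k ∈ Finset.range n, p k =
      (n : ℝ)⁻¹ * ∑ k ∈ Finset.range n, (p k - P) + P := by
    intro p P
    rw [Finset.sum_sub_distrib, Finset.sum_const, Finset.card_range, nsmul_eq_mul]
    field_simp
    ring
  have h1 : ∀ j, (p j - (n : ℝ)⁻¹ * ∑ k ∈ Finset.range n, p k) *
      (q j - (n : ℝ)⁻¹ * ∑ k ∈ Finset.range n, q k) = (p j - P) * (q j - Q) +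
      (-((p j - P) * ((n : ℝ)⁻¹ * ∑ k ∈ Finset.range n, (q k - Q)))
        - ((n : ℝ)⁻¹ * ∑ k ∈ Finset.range n, (p k - P)) * (q j - Q)
        + ((n : ℝ)⁻¹ * ∑ k ∈ Finset.range n, (p k - P)) *
          ((n : ℝ)⁻¹ * ∑ k ∈ Finset.range n, (q k - Q))) := by
    intro j
    rw [e p P, e q Q]
    ring
  refine ⟨h1, ?_⟩
  simp_rw [h1]
  rw [e (fun j => _ + _) C]
  simp only [Finset.sum_add_distrib, Finset.sum_sub_distrib, Finset.sum_neg_distrib,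
    ← Finset.sum_mul, ← Finset.mul_sum, Finset.sum_const, Finset.card_range, nsmul_eq_mul]
  field_simp
  ring

/-- Proposition 8, weighted bootstrap for SIR: for i.i.d. data `(Xᵢ, Yᵢ)` with
the stated moment conditions and i.i.d. weights `(wᵢ)` of mean `0` and variance `1`, almost
surely the conditional law of `n^{1/2} K̄*` given the data converges weakly to the asymptotic
law `N(0, V)` of `n^{1/2}(Ĉ − C)`, and `V* → V` in probability conditionally a.s. -/
theorem stmt_14 {pd Hd : ℕ} {Ω Ω' : Type*} [MeasurableSpace Ω] [MeasurableSpace Ω']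
    (μ : Measure Ω) [IsProbabilityMeasure μ]
    (ν : Measure Ω') [IsProbabilityMeasure ν]
    (X : ℕ → Ω → Fin pd → ℝ) (Y : ℕ → Ω → ℝ)
    (hXY : ∀ i, Measurable (fun ω => (X i ω, Y i ω)))
    (hindep : iIndepFun (fun i ω => (X i ω, Y i ω)) μ)
    (hident : ∀ i, IdentDistrib (fun ω => (X i ω, Y i ω)) (fun ω => (X 0 ω, Y 0 ω)) μ μ)
    (Ψ : ℝ → Fin Hd → ℝ) (hΨ : Measurable Ψ)
    -- i.i.d. weights with mean 0 and variance 1, carried by the bootstrap space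
    (w : ℕ → Ω' → ℝ) (hw : ∀ i, Measurable (w i))
    (hwindep : iIndepFun w ν)
    (hwident : ∀ i, IdentDistrib (w i) (w 0) ν ν)
    (hwint : Integrable (fun ω' => (w 0 ω') ^ 2) ν)
    (hwmean : ∫ ω', w 0 ω' ∂ν = 0) (hwvar : ∫ ω', (w 0 ω') ^ 2 ∂ν = 1)
    -- population quantities
    (EX : Fin pd → ℝ) (hEX : ∀ i, EX i = ∫ ω, X 0 ω i ∂μ)
    (EΨ : Fin Hd → ℝ) (hEΨ : ∀ h, EΨ h = ∫ ω, Ψ (Y 0 ω) h ∂μ)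
    (K : Ω → Fin pd → Fin Hd → ℝ)
    (hK : ∀ ω i h, K ω i h = (X 0 ω i - EX i) * (Ψ (Y 0 ω) h - EΨ h))
    (C : Fin pd → Fin Hd → ℝ) (hC : ∀ i h, C i h = ∫ ω, K ω i h ∂μ)
    -- moment conditions: E‖X‖² < ∞, E‖Ψ(Y)‖² < ∞, E‖K‖_F⁴ < ∞
    (hX2 : Integrable (fun ω => ∑ i, (X 0 ω i) ^ 2) μ)
    (hΨ2 : Integrable (fun ω => ∑ h, (Ψ (Y 0 ω) h) ^ 2) μ)
    (hK4 : Integrable (fun ω => (∑ i, ∑ h, (K ω i h) ^ 2) ^ 2) μ)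
    -- empirical quantities
    (Khat : ℕ → ℕ → Ω → Fin pd → Fin Hd → ℝ)
    (hKhat : ∀ n j ω i h, Khat n j ω i h =
      (X j ω i - (n : ℝ)⁻¹ * ∑ k ∈ Finset.range n, X k ω i) *
        (Ψ (Y j ω) h - (n : ℝ)⁻¹ * ∑ k ∈ Finset.range n, Ψ (Y k ω) h))
    (Chat : ℕ → Ω → Fin pd → Fin Hd → ℝ)
    (hChat : ∀ n ω i h, Chat n ω i h = (n : ℝ)⁻¹ * ∑ j ∈ Finset.range n, Khat n j ω i h)
    -- bootstrap quantities
    (Kstar : ℕ → ℕ → Ω → Ω' → Fin pd → Fin Hd → ℝ)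
    (hKstar : ∀ n j ω ω' i h,
      Kstar n j ω ω' i h = w j ω' * (Khat n j ω i h - Chat n ω i h))
    (Kbarstar : ℕ → Ω → Ω' → Fin pd → Fin Hd → ℝ)
    (hKbarstar : ∀ n ω ω' i h,
      Kbarstar n ω ω' i h = (n : ℝ)⁻¹ * ∑ j ∈ Finset.range n, Kstar n j ω ω' i h)
    -- V = Var(vec K) and its bootstrap counterpart V*
    (V : Fin Hd × Fin pd → Fin Hd × Fin pd → ℝ)
    (hV : ∀ a b, V a b = ∫ ω, (K ω a.2 a.1 - C a.2 a.1) * (K ω b.2 b.1 - C b.2 b.1) ∂μ)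
    (Vstar : ℕ → Ω → Ω' → Fin Hd × Fin pd → Fin Hd × Fin pd → ℝ)
    (hVstar : ∀ n ω ω' a b, Vstar n ω ω' a b = (n : ℝ)⁻¹ * ∑ j ∈ Finset.range n,
      (Kstar n j ω ω' a.2 a.1 - Kbarstar n ω ω' a.2 a.1) *
        (Kstar n j ω ω' b.2 b.1 - Kbarstar n ω ω' b.2 b.1)) :
    TendstoInDistribution μ
      (fun n ω => fun a : Fin Hd × Fin pd => Real.sqrt n * (Chat n ω a.2 a.1 - C a.2 a.1))
      (gaussianPi (Matrix.of V)) ∧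
    (∀ᵐ ω ∂μ, TendstoInDistribution ν
      (fun n ω' => fun a : Fin Hd × Fin pd => Real.sqrt n * Kbarstar n ω ω' a.2 a.1)
      (gaussianPi (Matrix.of V))) ∧
    (∀ᵐ ω ∂μ, TendstoInProbability ν (fun n ω' => Vstar n ω ω') V) := by
  classical
  have hmX : ∀ i : Fin pd, Measurable (fun s : (Fin pd → ℝ) × ℝ => s.1 i) := fun i => by fun_prop
  have hmΨ : ∀ h : Fin Hd, Measurable (fun s : (Fin pd → ℝ) × ℝ => Ψ s.2 h) := fun h =>
    (measurable_pi_apply h).comp (hΨ.comp measurable_snd)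
  set Z : ℕ → Ω → (Fin pd → ℝ) × ℝ := fun i ω => (X i ω, Y i ω) with hZdef
  let u : Fin Hd × Fin pd → (Fin pd → ℝ) × ℝ → ℝ := fun x s => s.1 x.2 - EX x.2
  let v : Fin Hd × Fin pd → (Fin pd → ℝ) × ℝ → ℝ := fun x s => Ψ s.2 x.1 - EΨ x.1
  let f : Fin Hd × Fin pd → (Fin pd → ℝ) × ℝ → ℝ := fun x s => u x s * v x s - C x.2 x.1
  have hu : ∀ x, Measurable (u x) := fun x => (hmX x.2).sub_const _
  have hv : ∀ x, Measurable (v x) := fun x => (hmΨ x.1).sub_const _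
  have hf : ∀ x, Measurable (f x) := fun x => ((hu x).mul (hv x)).sub_const _
  -- moments
  have hXm : ∀ i, MemLp (fun ω => X 0 ω i) 2 μ := by
    intro i
    have hm : Measurable (fun ω => X 0 ω i) := (hmX i).comp (hXY 0)
    refine (memLp_two_iff_integrable_sq hm.aestronglyMeasurable).2 ?_
    refine hX2.mono' (hm.pow_const 2).aestronglyMeasurable (Eventually.of_forall fun ω => ?_)
    rw [Real.norm_eq_abs, abs_of_nonneg (sq_nonneg _)]
    exact Finset.single_le_sum (f := fun i => X 0 ω i ^ 2) (fun i _ => sq_nonneg _)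
      (Finset.mem_univ i)
  have hΨm : ∀ h, MemLp (fun ω => Ψ (Y 0 ω) h) 2 μ := by
    intro i
    have hm : Measurable (fun ω => Ψ (Y 0 ω) i) := (hmΨ i).comp (hXY 0)
    refine (memLp_two_iff_integrable_sq hm.aestronglyMeasurable).2 ?_
    refine hΨ2.mono' (hm.pow_const 2).aestronglyMeasurable (Eventually.of_forall fun ω => ?_)
    rw [Real.norm_eq_abs, abs_of_nonneg (sq_nonneg _)]
    exact Finset.single_le_sum (f := fun i => Ψ (Y 0 ω) i ^ 2) (fun i _ => sq_nonneg _)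
      (Finset.mem_univ i)
  have hKuv : ∀ ω (x : Fin Hd × Fin pd), K ω x.2 x.1 = u x (Z 0 ω) * v x (Z 0 ω) :=
    fun ω x => hK ω x.2 x.1
  have hKm : ∀ x : Fin Hd × Fin pd, MemLp (fun ω => K ω x.2 x.1) 2 μ := by
    intro x
    have hm : Measurable (fun ω => K ω x.2 x.1) := by
      simp_rw [hKuv]
      exact ((hu x).mul (hv x)).comp (hXY 0)
    refine (memLp_two_iff_integrable_sq hm.aestronglyMeasurable).2 ?_
    refine (hK4.add (integrable_const 1)).mono' (hm.pow_const 2).aestronglyMeasurable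
      (Eventually.of_forall fun ω => ?_)
    rw [Real.norm_eq_abs, abs_of_nonneg (sq_nonneg _)]
    have h1 : K ω x.2 x.1 ^ 2 ≤ ∑ h, K ω x.2 h ^ 2 :=
      Finset.single_le_sum (f := fun h => K ω x.2 h ^ 2) (fun i _ => sq_nonneg _)
        (Finset.mem_univ x.1)
    have h2 : ∑ h, K ω x.2 h ^ 2 ≤ ∑ i, ∑ h, K ω i h ^ 2 :=
      Finset.single_le_sum (f := fun i => ∑ h, K ω i h ^ 2)
        (fun i _ => Finset.sum_nonneg fun h _ => sq_nonneg _) (Finset.mem_univ x.2)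
    have h3 := h1.trans h2
    simp only [Pi.add_apply]
    nlinarith [sq_nonneg ((∑ i, ∑ h, K ω i h ^ 2) - 1)]
  have hu2 : ∀ x, MemLp (fun ω => u x (Z 0 ω)) 2 μ := fun x => (hXm x.2).sub (memLp_const _)
  have hv2 : ∀ x, MemLp (fun ω => v x (Z 0 ω)) 2 μ := fun x => (hΨm x.1).sub (memLp_const _)
  have hfK : ∀ x ω, f x (Z 0 ω) = K ω x.2 x.1 - C x.2 x.1 := fun x ω => by
    simp only [f, hKuv]
  have hf2 : ∀ x, MemLp (fun ω => f x (Z 0 ω)) 2 μ := fun x => by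
    simp_rw [hfK]
    exact (hKm x).sub (memLp_const _)
  have hu0 : ∀ x, ∫ ω, u x (Z 0 ω) ∂μ = 0 := fun x => by
    simp only [u, Z]
    rw [integral_sub ((hXm x.2).integrable one_le_two) (integrable_const _), hEX]
    simp
  have hv0 : ∀ x, ∫ ω, v x (Z 0 ω) ∂μ = 0 := fun x => by
    simp only [v, Z]
    rw [integral_sub ((hΨm x.1).integrable one_le_two) (integrable_const _), hEΨ]
    simp
  have hf0 : ∀ x, ∫ ω, f x (Z 0 ω) ∂μ = 0 := fun x => by
    simp_rw [hfK]
    rw [integral_sub ((hKm x).integrable one_le_two) (integrable_const _), hC]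
    simp
  have hVf : ∀ x y, Matrix.of V x y = ∫ ω, f x (Z 0 ω) * f y (Z 0 ω) ∂μ := fun x y => by
    simp_rw [hfK]
    exact hV x y
  have hPSD : (Matrix.of V).PosSemidef := by
    refine .of_dotProduct_mulVec_nonneg ?_ fun t => ?_
    · ext x y
      rw [Matrix.conjTranspose_apply, hVf, hVf]
      simp only [star_trivial]
      simp_rw [mul_comm]
    · have e : star t ⬝ᵥ (Matrix.of V *ᵥ t) = ∫ ω, (∑ x, t x * f x (Z 0 ω)) ^ 2 ∂μ := by
        have e : ∀ ω, (∑ x, t x * f x (Z 0 ω)) ^ 2 =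
            ∑ x, ∑ y, t x * t y * (f x (Z 0 ω) * f y (Z 0 ω)) := by
          intro ω
          rw [pow_two, Finset.sum_mul_sum]
          refine Finset.sum_congr rfl fun x _ => Finset.sum_congr rfl fun y _ => ?_
          ring
        have hi : ∀ x y, Integrable (fun ω => t x * t y * (f x (Z 0 ω) * f y (Z 0 ω))) μ :=
          fun x y => ((hf2 x).integrable_mul (hf2 y)).const_mul _
        simp_rw [e]
        rw [integral_finsetSum _ fun x _ => integrable_finsetSum _ fun y _ => hi x y]
        simp only [dotProduct, Matrix.mulVec, star_trivial]
        refine Finset.sum_congr rfl fun x _ => ?_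
        rw [integral_finsetSum _ fun y _ => hi x y, Finset.mul_sum]
        refine Finset.sum_congr rfl fun y _ => ?_
        rw [integral_const_mul, ← hVf]
        ring
      rw [e]
      exact integral_nonneg fun ω => sq_nonneg _
  -- centered covariance
  have hChatC : ∀ n : ℕ, 0 < n → ∀ ω (x : Fin Hd × Fin pd), Chat n ω x.2 x.1 - C x.2 x.1 =
      (n : ℝ)⁻¹ * ∑ j ∈ Finset.range n, f x (Z j ω) -
        ((n : ℝ)⁻¹ * ∑ j ∈ Finset.range n, u x (Z j ω)) *
        ((n : ℝ)⁻¹ * ∑ j ∈ Finset.range n, v x (Z j ω)) := by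
    intro n hn ω x
    rw [hChat]
    simp_rw [hKhat]
    exact (aux_alg (fun j => X j ω x.2) (fun j => Ψ (Y j ω) x.1) (EX x.2) (EΨ x.1)
      (C x.2 x.1) n hn).2
  have hdec : ∀ n : ℕ, 0 < n → ∀ ω (x : Fin Hd × Fin pd) j,
      Khat n j ω x.2 x.1 - Chat n ω x.2 x.1 = f x (Z j ω) +
      (-(u x (Z j ω) * ((n : ℝ)⁻¹ * ∑ j ∈ Finset.range n, v x (Z j ω)))
        - ((n : ℝ)⁻¹ * ∑ j ∈ Finset.range n, u x (Z j ω)) * v x (Z j ω)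
        + ((n : ℝ)⁻¹ * ∑ j ∈ Finset.range n, u x (Z j ω)) *
          ((n : ℝ)⁻¹ * ∑ j ∈ Finset.range n, v x (Z j ω)) + (C x.2 x.1 - Chat n ω x.2 x.1)) := by
    intro n hn ω x j
    have := (aux_alg (fun j => X j ω x.2) (fun j => Ψ (Y j ω) x.1) (EX x.2) (EΨ x.1)
      (C x.2 x.1) n hn).1 j
    rw [hKhat, this]
    simp only [f, u, v, Z]
    ring
  refine ⟨?_, ?_⟩
  · have h := aux_part1 μ Z hXY hindep hident f u v hf hu hv hf2 hu2 hv2 hf0 hu0 hv0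
      (Matrix.of V) hPSD hVf
    convert h using 3 with n ω
    ext x
    rcases Nat.eq_zero_or_pos n with rfl | hn
    · simp
    · rw [hChatC n hn]
  -- almost sure facts
  have hae : ∀ᵐ ω ∂μ, (∀ (x : Fin Hd × Fin pd) (ε : ℝ), 0 < ε → ∀ᶠ n : ℕ in atTop, ∀ j < n,
        |Khat n j ω x.2 x.1 - Chat n ω x.2 x.1| ≤ ε * Real.sqrt n) ∧
      (∀ x y : Fin Hd × Fin pd, Tendsto (fun n : ℕ => (n : ℝ)⁻¹ * ∑ j ∈ Finset.range n,
        (Khat n j ω x.2 x.1 - Chat n ω x.2 x.1) * (Khat n j ω y.2 y.1 - Chat n ω y.2 y.1))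
        atTop (𝓝 (V x y))) := by
    have a1 := ae_all_iff.2 fun x => aux_slln μ Z hindep hident (u x) (hu x)
      ((hu2 x).integrable one_le_two)
    have a2 := ae_all_iff.2 fun x => aux_slln μ Z hindep hident (v x) (hv x)
      ((hv2 x).integrable one_le_two)
    have a3 := ae_all_iff.2 fun x => aux_slln μ Z hindep hident (f x) (hf x)
      ((hf2 x).integrable one_le_two)
    have a4 := ae_all_iff.2 fun x => aux_slln μ Z hindep hident (fun s => u x s ^ 2)
      ((hu x).pow_const 2) (hu2 x).integrable_sq
    have a5 := ae_all_iff.2 fun x => aux_slln μ Z hindep hident (fun s => v x s ^ 2)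
      ((hv x).pow_const 2) (hv2 x).integrable_sq
    have a6 := ae_all_iff.2 fun x => ae_all_iff.2 fun y =>
      aux_slln μ Z hindep hident (fun s => f x s * f y s)
      ((hf x).mul (hf y)) ((hf2 x).integrable_mul (hf2 y))
    filter_upwards [a1, a2, a3, a4, a5, a6] with ω b1 b2 b3 b4 b5 b6
    simp_rw [hu0] at b1
    simp_rw [hv0] at b2
    simp_rw [hf0] at b3
    simp_rw [← hVf] at b6
    have b7 : ∀ x, Tendsto (fun n : ℕ => (n : ℝ)⁻¹ * ∑ j ∈ Finset.range n, f x (Z j ω) ^ 2)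
        atTop (𝓝 (V x x)) := fun x => by
      simp_rw [pow_two]
      exact b6 x x
    have hd : ∀ x : Fin Hd × Fin pd, Tendsto (fun n => C x.2 x.1 - Chat n ω x.2 x.1)
        atTop (𝓝 0) := by
      intro x
      have h := ((b3 x).sub ((b1 x).mul (b2 x))).neg
      simp only [mul_zero, sub_zero, neg_zero] at h
      refine h.congr' ?_
      filter_upwards [eventually_gt_atTop 0] with n hn
      rw [← hChatC n hn]
      ring
    have hr := fun x => aux_rem (fun j => u x (Z j ω)) (fun j => v x (Z j ω)) _ _ _ _ _
      (b4 x) (b5 x) (b1 x) (b2 x) (hd x)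
    constructor
    · intro x ε hε
      filter_upwards [aux_max' (fun j => f x (Z j ω)) (fun n j => _) _ (b7 x) (hr x) ε hε,
        eventually_gt_atTop 0] with n h1 hn j hj
      rw [hdec n hn]
      exact h1 j hj
    · intro x y
      refine (aux_cov (fun j => f x (Z j ω)) (fun j => f y (Z j ω)) (fun n j => _) (fun n j => _)
        _ _ _ (b6 x y) (b7 x) (b7 y) (hr x) (hr y)).congr' ?_
      filter_upwards [eventually_gt_atTop 0] with n hn
      congr 1
      refine Finset.sum_congr rfl fun j _ => ?_
      rw [hdec n hn, hdec n hn]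
  constructor
  · filter_upwards [hae] with ω hω
    have h := aux_boot_clt ν w hw hwindep hwident hwint hwmean hwvar (Matrix.of V) hPSD
      (fun n j x => Khat n j ω x.2 x.1 - Chat n ω x.2 x.1) (fun x ε hε => hω.1 x ε hε) hω.2
    simp_rw [hKbarstar, hKstar]
    exact h
  · filter_upwards [hae] with ω hω
    refine aux_boot_var ν w hw hwindep hwident hwint hwmean hwvar V
      (fun n j x => Khat n j ω x.2 x.1 - Chat n ω x.2 x.1) (fun x ε hε => hω.1 x ε hε) hω.2 _ ?_
    intro n ω' x y
    rw [hVstar]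
    simp_rw [hKbarstar, hKstar]

end
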